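/- Let α be a Pisot number. Then the set 𝓛(α) = { limsup_{n→∞} ‖ξ·α^n‖ : ξ ∈ ℝ } is a closed subset of [0, 1/2]. -/

import Mathlib

/-- Distance from `x` to the nearest integer. -/
noncomputable def distNearestInt (x : ℝ) : ℝ := |x - round x|

/-- `limsup_{n→∞} ‖ξ·α^n‖`. -/
noncomputable def limsupDist (α ξ : ℝ) : ℝ :=
  Filter.limsup (fun n : ℕ => distNearestInt (ξ * α ^ n)) Filter.atTop

/-- The multiplicative Markoff–Lagrange spectrum `𝓛(α)`. -/
noncomputable def specL (α : ℝ) : Set ℝ := {l : ℝ | ∃ ξ : ℝ, limsupDist α ξ = l}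

/-- A Pisot number: a real algebraic integer `α > 1` all of whose conjugates other
than `α` itself have complex absolute value `< 1`. -/
def IsPisot (α : ℝ) : Prop :=
  1 < α ∧ IsIntegral ℤ α ∧
    ∀ z : ℂ, Polynomial.aeval z (minpoly ℤ α) = 0 → z ≠ (α : ℂ) → ‖z‖ < 1

open Filter Topology Polynomial

/-- The shift operator on sequences. -/
def seqShift (R : Type*) [CommRing R] : Module.End R (ℕ → R) := LinearMap.funLeft R R (· + 1)

lemma seqShift_pow_apply {R : Type*} [CommRing R] (i : ℕ) (z : ℕ → R) (n : ℕ) :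
    (seqShift R ^ i) z n = z (n + i) := by
  induction i generalizing n with
  | zero => simp
  | succ i ih =>
    rw [pow_succ', Module.End.mul_apply]
    change (seqShift R ^ i) z (n + 1) = _
    rw [ih]
    congr 1
    ring

lemma aeval_seqShift_apply {R : Type*} [CommRing R] (P : R[X]) (z : ℕ → R) (n : ℕ) :
    (aeval (seqShift R) P) z n = ∑ i ∈ Finset.range (P.natDegree + 1), P.coeff i * z (n + i) := by
  simp [aeval_eq_sum_range, LinearMap.sum_apply, Finset.sum_apply, seqShift_pow_apply]

lemma aeval_seqShift_X_sub_C_apply {R : Type*} [CommRing R] (β : R) (z : ℕ → R) (n : ℕ) :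
    (aeval (seqShift R) (X - C β)) z n = z (n + 1) - β * z n := by
  simp [seqShift, Algebra.algebraMap_eq_smul_one, LinearMap.funLeft_apply]

/-- A contracting first-order recurrence driven by a null sequence has a null solution. -/
lemma tendsto_zero_of_contracting {β : ℂ} (hβ : ‖β‖ < 1) {t : ℕ → ℂ}
    (h : Tendsto (fun n => t (n + 1) - β * t n) atTop (𝓝 0)) : Tendsto t atTop (𝓝 0) := by
  rw [Metric.tendsto_atTop]
  intro ε hε
  obtain ⟨N, hN⟩ := Metric.tendsto_atTop.1 h (ε / 2 * (1 - ‖β‖))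
    (mul_pos (half_pos hε) (sub_pos.2 hβ))
  have step (j : ℕ) : ‖t (N + j)‖ ≤ ε / 2 + ‖β‖ ^ j * ‖t N‖ := by
    induction j with
    | zero => simp; positivity
    | succ j ih =>
      have h1 := hN (N + j) (by omega)
      rw [dist_zero_right] at h1
      have h2 : ‖t (N + j + 1)‖ ≤ ‖t (N + j + 1) - β * t (N + j)‖ + ‖β‖ * ‖t (N + j)‖ := by
        rw [← norm_mul]
        simpa using norm_add_le (t (N + j + 1) - β * t (N + j)) (β * t (N + j))
      have h3 := mul_le_mul_of_nonneg_left ih (norm_nonneg β)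
      rw [← add_assoc, pow_succ]
      nlinarith
  have hlim : Tendsto (fun j => ‖β‖ ^ j * ‖t N‖) atTop (𝓝 0) := by
    simpa using (tendsto_pow_atTop_nhds_zero_of_lt_one (norm_nonneg β) hβ).mul_const ‖t N‖
  obtain ⟨J, hJ⟩ := eventually_atTop.1 (hlim.eventually (gt_mem_nhds (half_pos hε)))
  refine ⟨N + J, fun n hn => ?_⟩
  obtain ⟨j, rfl⟩ := Nat.exists_eq_add_of_le hn
  have h1 := step (J + j)
  have h2 := hJ (J + j) (by omega)
  rw [dist_zero_right, add_assoc]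
  linarith

lemma tendsto_zero_of_aeval_seqShift_prod (s : Multiset ℂ) (hs : ∀ β ∈ s, ‖β‖ < 1) {t : ℕ → ℂ}
    (h : Tendsto (aeval (seqShift ℂ) (s.map fun β => X - C β).prod t) atTop (𝓝 0)) :
    Tendsto t atTop (𝓝 0) := by
  induction s using Multiset.induction_on with
  | empty => simpa using h
  | cons β s ih =>
    refine ih (fun γ hγ => hs γ (Multiset.mem_cons_of_mem hγ))
      (tendsto_zero_of_contracting (hs β (Multiset.mem_cons_self β s)) ?_)
    rw [Multiset.map_cons, Multiset.prod_cons, map_mul, Module.End.mul_apply] at h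
    refine h.congr fun n => ?_
    rw [aeval_seqShift_X_sub_C_apply]

/-- A solution of an expanding first-order recurrence driven by a null sequence is asymptotic to
an exact geometric sequence. -/
lemma exists_tendsto_sub_of_expanding {a : ℂ} (ha : 1 < ‖a‖) {z : ℕ → ℂ}
    (h : Tendsto (fun n => z (n + 1) - a * z n) atTop (𝓝 0)) :
    ∃ ξ : ℂ, Tendsto (fun n => z n - ξ * a ^ n) atTop (𝓝 0) := by
  have ha0 : a ≠ 0 := by rintro rfl; simp at ha; linarith
  have hr : ‖a‖⁻¹ < 1 := inv_lt_one_of_one_lt₀ ha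
  have hpos : 0 < ‖a‖ := by linarith
  set w : ℕ → ℂ := fun n => z n / a ^ n with hw
  have hdist (ε : ℝ) (n : ℕ) (hn : ‖z (n + 1) - a * z n‖ ≤ ε) :
      dist (w n) (w (n + 1)) ≤ ε * ‖a‖⁻¹ * ‖a‖⁻¹ ^ n := by
    have : w (n + 1) - w n = (z (n + 1) - a * z n) * (a⁻¹ * a⁻¹ ^ n) := by
      simp only [hw, inv_pow, pow_succ]; field_simp
    rw [dist_comm, dist_eq_norm, this, norm_mul, norm_mul, norm_pow, norm_inv, mul_assoc]
    gcongr
  obtain ⟨M, hM⟩ := isBounded_iff_forall_norm_le.1 (Metric.isBounded_range_of_tendsto _ h)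
  obtain ⟨ξ, hξ⟩ := cauchySeq_tendsto_of_complete (cauchySeq_of_le_geometric _ _ hr
    fun n => hdist M n (hM _ ⟨n, rfl⟩))
  refine ⟨ξ, Metric.tendsto_atTop.2 fun ε hε => ?_⟩
  have hc : 0 < ‖a‖ - 1 := by linarith
  obtain ⟨N, hN⟩ := Metric.tendsto_atTop.1 h (ε / 2 * (‖a‖ - 1)) (by positivity)
  refine ⟨N, fun n hn => ?_⟩
  have key := dist_le_of_le_geometric_of_tendsto₀ (f := fun j => w (n + j)) ‖a‖⁻¹
    (ε / 2 * (‖a‖ - 1) * ‖a‖⁻¹ * ‖a‖⁻¹ ^ n) hr (fun j => by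
      have := hdist (ε / 2 * (‖a‖ - 1)) (n + j) (by
        simpa using (hN (n + j) (by omega)).le)
      rw [pow_add] at this
      rw [mul_assoc _ (_ ^ n)]
      exact this) (hξ.comp (tendsto_add_atTop_nat n |>.congr fun j => add_comm _ _))
  have hz : z n - ξ * a ^ n = (w n - ξ) * a ^ n := by
    simp only [hw]; field_simp
  rw [dist_zero_right, hz, norm_mul, norm_pow, ← dist_eq_norm]
  calc dist (w n) ξ * ‖a‖ ^ n
      ≤ (ε / 2 * (‖a‖ - 1) * ‖a‖⁻¹ * ‖a‖⁻¹ ^ n) / (1 - ‖a‖⁻¹) * ‖a‖ ^ n := by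
        gcongr; exact key
    _ = ε / 2 := by
        have : 1 - ‖a‖⁻¹ ≠ 0 := by linarith
        rw [inv_pow]
        field_simp
    _ < ε := half_lt_self hε

/-- The minimal polynomial of a Pisot number factors over `ℂ` as `X - α` times a product of
linear factors with roots in the open unit disc. -/
lemma IsPisot.exists_map_minpoly_eq {α : ℝ} (hα : IsPisot α) :
    ∃ s : Multiset ℂ, (∀ β ∈ s, ‖β‖ < 1) ∧ (minpoly ℤ α).map (algebraMap ℤ ℂ) =
      (s.map fun β => X - C β).prod * (X - C (α : ℂ)) := by
  obtain ⟨-, hint, hconj⟩ := hα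
  set P := (minpoly ℤ α).map (algebraMap ℤ ℂ) with hP
  have hmonic : P.Monic := (minpoly.monic hint).map _
  have hPQ : P = (minpoly ℚ α).map (algebraMap ℚ ℂ) := by
    rw [minpoly.isIntegrallyClosed_eq_field_fractions' ℚ hint, Polynomial.map_map,
      ← IsScalarTower.algebraMap_eq]
  have hnodup : P.roots.Nodup := by
    rw [hPQ]
    exact nodup_roots (minpoly.irreducible hint.tower_top).separable.map
  have hroot : (α : ℂ) ∈ P.roots := by
    rw [mem_roots hmonic.ne_zero, IsRoot.def, hP, eval_map_algebraMap]
    have := aeval_algebraMap_apply ℂ α (minpoly ℤ α)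
    simpa using this
  refine ⟨P.roots.erase α, fun β hβ => ?_, ?_⟩
  · rw [hnodup.mem_erase_iff] at hβ
    refine hconj β ?_ hβ.1
    have := isRoot_of_mem_roots hβ.2
    rwa [IsRoot.def, hP, eval_map_algebraMap] at this
  · conv_lhs => rw [(IsAlgClosed.splits P).eq_prod_roots_of_monic hmonic,
      ← Multiset.cons_erase hroot, Multiset.map_cons, Multiset.prod_cons, mul_comm]

/-- A solution of the inhomogeneous linear recurrence with monic characteristic polynomial `P`. -/
def recurrenceSolution (P : ℤ[X]) (s : ℕ → ℤ) (n : ℕ) : ℤ :=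
  if n < P.natDegree then 0 else
    s (n - P.natDegree) - ∑ i : Fin P.natDegree,
      P.coeff i * recurrenceSolution P s (n - P.natDegree + i)
termination_by n
decreasing_by omega

lemma sum_coeff_mul_recurrenceSolution {P : ℤ[X]} (hP : P.Monic) (s : ℕ → ℤ) (n : ℕ) :
    ∑ i ∈ Finset.range (P.natDegree + 1), P.coeff i * recurrenceSolution P s (n + i) = s n := by
  rw [Finset.sum_range_succ, hP.coeff_natDegree, one_mul,
    recurrenceSolution.eq_1 P s (n + P.natDegree), if_neg (by omega), Nat.add_sub_cancel,
    Finset.sum_range fun i => P.coeff i * recurrenceSolution P s (n + i)]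
  ring

/-- Shadowing: an approximate solution modulo one of the linear recurrence attached to a Pisot
number `α` is asymptotic, modulo one, to some `ξ * α ^ n`. -/
lemma IsPisot.exists_shadow {α : ℝ} (hα : IsPisot α) (e : ℕ → UnitAddCircle)
    (he : Tendsto (fun n => ∑ i ∈ Finset.range ((minpoly ℤ α).natDegree + 1),
      (minpoly ℤ α).coeff i • e (n + i)) atTop (𝓝 0)) :
    ∃ ξ : ℝ, Tendsto (fun n => ((ξ * α ^ n : ℝ) : UnitAddCircle) - e n) atTop (𝓝 0) := by
  set P := minpoly ℤ α with hP
  choose r hr using fun n => QuotientAddGroup.mk_surjective (e n)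
  have hrcoe (n : ℕ) : ((r n : ℝ) : UnitAddCircle) = e n := hr n
  set σ : ℕ → ℝ := fun n => ∑ i ∈ Finset.range (P.natDegree + 1), P.coeff i * r (n + i) with hσ
  have hσe (n : ℕ) : ((σ n : ℝ) : UnitAddCircle) =
      ∑ i ∈ Finset.range (P.natDegree + 1), P.coeff i • e (n + i) := by
    rw [hσ, ← QuotientAddGroup.mk'_apply, map_sum]
    refine Finset.sum_congr rfl fun i _ => ?_
    rw [← hrcoe, ← zsmul_eq_mul, map_zsmul]
    rfl
  have hsmall : Tendsto (fun n => σ n - round (σ n)) atTop (𝓝 0) := by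
    rw [tendsto_zero_iff_abs_tendsto_zero]
    refine (tendsto_zero_iff_norm_tendsto_zero.1 he).congr fun n => ?_
    rw [← hσe, UnitAddCircle.norm_eq]
    rfl
  set u := recurrenceSolution P fun n => round (σ n)
  have hu := sum_coeff_mul_recurrenceSolution (minpoly.monic hα.2.1) fun n => round (σ n)
  set z : ℕ → ℂ := fun n => ((r n - u n : ℝ) : ℂ) with hz
  obtain ⟨s, hs, hfac⟩ := hα.exists_map_minpoly_eq
  have hPz : Tendsto (aeval (seqShift ℂ) (P.map (algebraMap ℤ ℂ)) z) atTop (𝓝 0) := by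
    have : Tendsto (fun n => ((σ n - round (σ n) : ℝ) : ℂ)) atTop (𝓝 0) := by
      have hlim := (Complex.continuous_ofReal.tendsto 0).comp hsmall
      rwa [Complex.ofReal_zero] at hlim
    refine this.congr fun n => ?_
    rw [aeval_seqShift_apply, (minpoly.monic hα.2.1).natDegree_map, ← hu n]
    simp only [hσ, hz, coeff_map]
    push_cast
    rw [← Finset.sum_sub_distrib]
    refine Finset.sum_congr rfl fun i _ => ?_
    simp only [algebraMap_int_eq, eq_intCast]
    rw [mul_sub]
  rw [hP, hfac, map_mul, Module.End.mul_apply] at hPz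
  have ht := tendsto_zero_of_aeval_seqShift_prod s hs hPz
  obtain ⟨ξ, hξ⟩ := exists_tendsto_sub_of_expanding (a := (α : ℂ)) (z := z)
    (by rw [Complex.norm_real]; exact hα.1.trans_le (le_abs_self α))
    (ht.congr fun n => aeval_seqShift_X_sub_C_apply _ _ _)
  refine ⟨ξ.re, ?_⟩
  have hre : Tendsto (fun n => ξ.re * α ^ n - (r n - u n)) atTop (𝓝 0) := by
    have := ((Complex.continuous_re.tendsto 0).comp hξ).neg
    rw [Complex.zero_re, neg_zero] at this
    refine this.congr fun n => ?_
    simp only [Function.comp_apply, hz, Complex.sub_re, Complex.ofReal_re, ← Complex.ofReal_pow,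
      Complex.re_mul_ofReal]
    ring
  have hcont : Tendsto (fun x : ℝ => (x : UnitAddCircle)) (𝓝 0) (𝓝 0) :=
    (AddCircle.continuous_mk' (1 : ℝ)).tendsto 0
  refine (hcont.comp hre).congr fun n => ?_
  have hint : ((u n : ℝ) : UnitAddCircle) = 0 := by
    rw [AddCircle.coe_eq_zero_iff]
    exact ⟨u n, by simp⟩
  simp only [Function.comp_apply]
  rw [AddCircle.coe_sub, AddCircle.coe_sub, hint, sub_zero, hrcoe]

/-- The forward orbit `(ξ α ^ n, ξ α ^ (n + 1), …)` modulo one. -/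
noncomputable def tailModOne (α ξ : ℝ) (n i : ℕ) : UnitAddCircle := ((ξ * α ^ (n + i) : ℝ) :)

lemma norm_tailModOne_zero (α ξ : ℝ) (n : ℕ) :
    ‖tailModOne α ξ n 0‖ = distNearestInt (ξ * α ^ n) :=
  UnitAddCircle.norm_eq

lemma tailModOne_succ (α ξ : ℝ) (n i : ℕ) :
    tailModOne α ξ n (i + 1) = tailModOne α ξ (n + 1) i := by
  rw [tailModOne, tailModOne, add_right_comm, add_assoc]

lemma sum_coeff_smul_tailModOne (α ξ : ℝ) (n : ℕ) :
    ∑ i ∈ Finset.range ((minpoly ℤ α).natDegree + 1),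
      (minpoly ℤ α).coeff i • tailModOne α ξ n i = 0 := by
  have h : ∑ i ∈ Finset.range ((minpoly ℤ α).natDegree + 1),
      (minpoly ℤ α).coeff i • (ξ * α ^ (n + i)) = 0 := by
    have h0 := minpoly.aeval ℤ α
    rw [aeval_eq_sum_range] at h0
    calc _ = ξ * α ^ n * ∑ i ∈ Finset.range ((minpoly ℤ α).natDegree + 1),
          (minpoly ℤ α).coeff i • α ^ i := by
          rw [Finset.mul_sum]
          refine Finset.sum_congr rfl fun i _ => ?_
          rw [mul_smul_comm, pow_add, mul_assoc]
      _ = 0 := by rw [h0, mul_zero]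
  have hmap := congrArg (QuotientAddGroup.mk' (AddSubgroup.zmultiples (1 : ℝ))) h
  rw [map_sum, map_zero] at hmap
  rw [← hmap]
  refine Finset.sum_congr rfl fun i _ => ?_
  rw [map_zsmul]
  rfl

lemma distNearestInt_nonneg (x : ℝ) : 0 ≤ distNearestInt x := abs_nonneg _

lemma distNearestInt_le_half (x : ℝ) : distNearestInt x ≤ 1 / 2 := abs_sub_round x

lemma isBoundedUnder_le_distNearestInt (α ξ : ℝ) :
    IsBoundedUnder (· ≤ ·) atTop fun n : ℕ => distNearestInt (ξ * α ^ n) :=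
  isBoundedUnder_of ⟨1 / 2, fun _ => distNearestInt_le_half _⟩

lemma isCoboundedUnder_le_distNearestInt (α ξ : ℝ) :
    IsCoboundedUnder (· ≤ ·) atTop fun n : ℕ => distNearestInt (ξ * α ^ n) :=
  (isBoundedUnder_of ⟨0, fun _ => distNearestInt_nonneg _⟩ :
    IsBoundedUnder (· ≥ ·) atTop _).isCoboundedUnder_le

lemma specL_subset_Icc (α : ℝ) : specL α ⊆ Set.Icc 0 (1 / 2) := by
  rintro _ ⟨ξ, rfl⟩
  exact ⟨le_limsup_of_frequently_le (Frequently.of_forall fun _ => distNearestInt_nonneg _)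
      (isBoundedUnder_le_distNearestInt α ξ),
    limsup_le_of_le (isCoboundedUnder_le_distNearestInt α ξ)
      (Eventually.of_forall fun _ => distNearestInt_le_half _)⟩

lemma eventually_distNearestInt_lt {α ξ b : ℝ} (h : limsupDist α ξ < b) :
    ∀ᶠ n in atTop, distNearestInt (ξ * α ^ n) < b :=
  eventually_lt_of_limsup_lt h (isBoundedUnder_le_distNearestInt α ξ)

/-- The limsup is attained at an accumulation point of the forward orbit. -/
lemma exists_mapClusterPt_tailModOne (α ξ : ℝ) :
    ∃ x : ℕ → UnitAddCircle, MapClusterPt x atTop (tailModOne α ξ) ∧ ‖x 0‖ = limsupDist α ξ := by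
  have hfreq (j : ℕ) : ∃ᶠ n in atTop,
      |distNearestInt (ξ * α ^ n) - limsupDist α ξ| < 1 / ((j : ℝ) + 1) := by
    have hj : 0 < 1 / ((j : ℝ) + 1) := Nat.one_div_pos_of_nat
    have h1 : ∃ᶠ n in atTop, limsupDist α ξ - 1 / ((j : ℝ) + 1) < distNearestInt (ξ * α ^ n) :=
      frequently_lt_of_lt_limsup (isCoboundedUnder_le_distNearestInt α ξ)
        (sub_lt_self (limsupDist α ξ) hj)
    have h2 := eventually_distNearestInt_lt (lt_add_of_pos_right (limsupDist α ξ) hj)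
    refine (h1.and_eventually h2).mono fun n hn => abs_lt.2 ⟨?_, ?_⟩ <;> linarith [hn.1, hn.2]
  obtain ⟨φ, hφ, hφl⟩ := extraction_forall_of_frequently hfreq
  obtain ⟨x, ψ, hψ, hx⟩ := CompactSpace.tendsto_subseq (tailModOne α ξ ∘ φ)
  have hsub : Tendsto (φ ∘ ψ) atTop atTop := hφ.tendsto_atTop.comp hψ.tendsto_atTop
  refine ⟨x, MapClusterPt.of_comp hsub hx.mapClusterPt, ?_⟩
  have hnorm : Tendsto (fun j => distNearestInt (ξ * α ^ φ (ψ j))) atTop (𝓝 ‖x 0‖) :=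
    ((tendsto_pi_nhds.1 hx 0).norm).congr fun j => norm_tailModOne_zero _ _ _
  refine tendsto_nhds_unique hnorm ?_
  rw [tendsto_iff_dist_tendsto_zero]
  exact squeeze_zero (fun _ => dist_nonneg) (fun j => (hφl (ψ j)).le)
    ((tendsto_one_div_add_atTop_nhds_zero_nat (𝕜 := ℝ)).comp hψ.tendsto_atTop)

/-- A limit of points of the spectrum comes with a point near which suitable orbit segments
begin and end. -/
lemma exists_recurrent_point {α l : ℝ} (hl : l ∈ closure (specL α)) :
    ∃ x : ℕ → UnitAddCircle, ‖x 0‖ = l ∧ ∀ U ∈ 𝓝 x, ∀ ε > 0, ∃ (ξ : ℝ) (p q : ℕ), p < q ∧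
      tailModOne α ξ p ∈ U ∧ tailModOne α ξ q ∈ U ∧
      ∀ n ≥ p, distNearestInt (ξ * α ^ n) < l + ε := by
  obtain ⟨v, hv, hvl⟩ := mem_closure_iff_seq_limit.1 hl
  choose ξ hξ using hv
  choose y hy hynorm using fun k => exists_mapClusterPt_tailModOne α (ξ k)
  obtain ⟨x, ψ, hψ, hx⟩ := CompactSpace.tendsto_subseq y
  have hvψ := hvl.comp hψ.tendsto_atTop
  refine ⟨x, tendsto_nhds_unique (tendsto_pi_nhds.1 hx 0).norm
    (hvψ.congr fun k => by simp [hynorm, hξ]), fun U hU ε hε => ?_⟩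
  obtain ⟨W, hWU, hW, hxW⟩ := mem_nhds_iff.1 hU
  obtain ⟨k, hkW, hkl⟩ := ((hx.eventually (hW.mem_nhds hxW)).and
    (hvψ.eventually (gt_mem_nhds (lt_add_of_pos_right l hε)))).exists
  have hfreq : ∃ᶠ n in atTop, tailModOne α (ξ (ψ k)) n ∈ W :=
    (hy (ψ k)).frequently (hW.mem_nhds hkW)
  have hev := eventually_distNearestInt_lt ((hξ (ψ k)).trans_lt hkl)
  obtain ⟨N, hN⟩ := eventually_atTop.1 hev
  obtain ⟨p, hpN, hp⟩ := frequently_atTop.1 hfreq N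
  obtain ⟨q, hqp, hq⟩ := frequently_atTop.1 hfreq (p + 1)
  exact ⟨ξ (ψ k), p, q, hqp, hWU hp, hWU hq, fun n hn => hN n (hpN.trans hn)⟩

/-- Runs through the intervals `[p 0, q 0)`, `[p 1, q 1)`, … consecutively, recording the index of
the interval and the position in it. -/
def concatState (p q : ℕ → ℕ) : ℕ → ℕ × ℕ
  | 0 => (0, p 0)
  | n + 1 =>
    let s := concatState p q n
    if s.2 + 1 < q s.1 then (s.1, s.2 + 1) else (s.1 + 1, p (s.1 + 1))

section concatState

variable {p q : ℕ → ℕ}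

lemma concatState_mem (hpq : ∀ k, p k < q k) (n : ℕ) :
    p (concatState p q n).1 ≤ (concatState p q n).2 ∧
      (concatState p q n).2 < q (concatState p q n).1 := by
  induction n with
  | zero => exact ⟨le_rfl, hpq 0⟩
  | succ n ih =>
    rw [concatState]
    split_ifs with h
    · exact ⟨ih.1.trans (Nat.le_succ _), h⟩
    · exact ⟨le_rfl, hpq _⟩

lemma exists_concatState_eq (hpq : ∀ k, p k < q k) (k : ℕ) :
    ∃ n ≥ k, concatState p q n = (k, p k) := by
  induction k with
  | zero => exact ⟨0, le_rfl, rfl⟩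
  | succ k ih =>
    obtain ⟨n, hnk, hn⟩ := ih
    have hrun (j : ℕ) (hj : p k + j < q k) : concatState p q (n + j) = (k, p k + j) := by
      induction j with
      | zero => exact hn
      | succ j ihj =>
        rw [← add_assoc, concatState, ihj (by omega)]
        simp only
        rw [if_pos (by omega), add_assoc]
    have hk := hpq k
    refine ⟨n + (q k - p k - 1) + 1, by omega, ?_⟩
    rw [concatState, hrun _ (by omega)]
    simp only
    rw [if_neg (by omega)]

lemma tendsto_concatState_fst (hpq : ∀ k, p k < q k) :
    Tendsto (fun n => (concatState p q n).1) atTop atTop := by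
  refine tendsto_atTop_atTop_of_monotone (monotone_nat_of_le_succ fun n => ?_) fun k => ?_
  · rw [concatState]
    split_ifs
    exacts [le_rfl, Nat.le_succ _]
  · obtain ⟨n, -, hn⟩ := exists_concatState_eq hpq k
    exact ⟨n, by rw [hn]⟩

end concatState

lemma IsPisot.exists_shadow_of_pseudoOrbit {α : ℝ} (hα : IsPisot α) (ξ : ℕ → ℝ) (m : ℕ → ℕ)
    (h : ∀ i, Tendsto (fun n => tailModOne α (ξ n) (m n + 1) i -
      tailModOne α (ξ (n + 1)) (m (n + 1)) i) atTop (𝓝 0)) :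
    ∃ η : ℝ, Tendsto (fun n => tailModOne α η n 0 - tailModOne α (ξ n) (m n) 0) atTop (𝓝 0) := by
  set y : ℕ → ℕ → UnitAddCircle := fun n => tailModOne α (ξ n) (m n) with hy
  have hshift (i : ℕ) : Tendsto (fun n => y n i - y (n + i) 0) atTop (𝓝 0) := by
    induction i with
    | zero => simp
    | succ i ih =>
      have := (h i).add (ih.comp (tendsto_add_atTop_nat 1))
      rw [add_zero] at this
      refine this.congr fun n => ?_
      simp only [hy, Function.comp_apply, tailModOne_succ]
      rw [sub_add_sub_cancel, add_right_comm, add_assoc n i 1]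
  refine hα.exists_shadow (fun n => y n 0) ?_
  have hsum := tendsto_finsetSum (Finset.range ((minpoly ℤ α).natDegree + 1))
    fun i _ => ((hshift i).const_smul ((minpoly ℤ α).coeff i)).neg
  simp only [smul_zero, neg_zero, Finset.sum_const_zero] at hsum
  refine hsum.congr fun n => ?_
  rw [← sub_zero (∑ i ∈ _, _ • y (n + i) 0), ← sum_coeff_smul_tailModOne α (ξ n) (m n),
    ← Finset.sum_sub_distrib]
  refine Finset.sum_congr rfl fun i _ => ?_
  rw [smul_sub, neg_sub]

lemma IsPisot.isClosed_specL {α : ℝ} (hα : IsPisot α) : IsClosed (specL α) := by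
  refine isClosed_of_closure_subset fun l hl => ?_
  obtain ⟨x, hxl, hx⟩ := exists_recurrent_point hl
  obtain ⟨U, hU⟩ := (𝓝 x).exists_antitone_basis
  choose ξ p q hpq hp hq hlt using fun k : ℕ =>
    hx (U k) (hU.1.mem_of_mem trivial) (1 / ((k : ℝ) + 1)) Nat.one_div_pos_of_nat
  have hpx := hU.tendsto hp
  have hqx := hU.tendsto hq
  set κ : ℕ → ℕ := fun n => (concatState p q n).1 with hκ
  set m : ℕ → ℕ := fun n => (concatState p q n).2 with hm
  have hκtop : Tendsto κ atTop atTop := tendsto_concatState_fst hpq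
  obtain ⟨η, hη⟩ := hα.exists_shadow_of_pseudoOrbit (fun n => ξ (κ n)) m fun i => by
    have hjump : Tendsto (fun k => ‖tailModOne α (ξ k) (q k) i -
        tailModOne α (ξ (k + 1)) (p (k + 1)) i‖) atTop (𝓝 0) := by
      have := ((tendsto_pi_nhds.1 hqx i).sub
        ((tendsto_pi_nhds.1 hpx i).comp (tendsto_add_atTop_nat 1))).norm
      rwa [sub_self, norm_zero] at this
    refine squeeze_zero_norm (fun n => ?_) (hjump.comp hκtop)
    have hmem := concatState_mem hpq n
    simp only [Function.comp_apply, hκ, hm, concatState]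
    split_ifs with h
    · simp
    · rw [show (concatState p q n).2 + 1 = q (concatState p q n).1 by omega]
  have hnorm : Tendsto (fun n => distNearestInt (η * α ^ n) -
      distNearestInt (ξ (κ n) * α ^ m n)) atTop (𝓝 0) := by
    refine squeeze_zero_norm (fun n => ?_) (tendsto_zero_iff_norm_tendsto_zero.1 hη)
    rw [← norm_tailModOne_zero, ← norm_tailModOne_zero]
    exact abs_norm_sub_norm_le _ _
  refine ⟨η, le_antisymm (le_of_forall_pos_le_add fun ε hε => ?_)
    (le_of_forall_pos_sub_le fun ε hε => ?_)⟩
  · refine limsup_le_of_le (isCoboundedUnder_le_distNearestInt α η) ?_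
    have hk := (tendsto_one_div_add_atTop_nhds_zero_nat (𝕜 := ℝ)).comp hκtop
    filter_upwards [hnorm.eventually (gt_mem_nhds (half_pos hε)),
      hk.eventually (gt_mem_nhds (half_pos hε))] with n h1 h2
    have h3 := hlt (κ n) (m n) (concatState_mem hpq n).1
    simp only [Function.comp_apply] at h2
    linarith
  · refine le_limsup_of_frequently_le ?_ (isBoundedUnder_le_distNearestInt α η)
    have hstart : Tendsto (fun k => distNearestInt (ξ k * α ^ p k)) atTop (𝓝 l) := by
      rw [← hxl]
      exact (tendsto_pi_nhds.1 hpx 0).norm.congr fun k => norm_tailModOne_zero _ _ _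
    obtain ⟨N, hN⟩ := eventually_atTop.1 ((hstart.eventually (lt_mem_nhds (sub_lt_self l
      (half_pos hε)))))
    obtain ⟨M, hM⟩ := eventually_atTop.1
      (hnorm.eventually (lt_mem_nhds (neg_lt_zero.2 (half_pos hε))))
    refine frequently_atTop.2 fun K => ?_
    obtain ⟨n, hn, hstate⟩ := exists_concatState_eq hpq (max K (max N M))
    have h1 := hN (max K (max N M)) (by omega)
    have h2 := hM n (by omega)
    simp only [hκ, hm, hstate] at h2
    exact ⟨n, by omega, by linarith⟩

theorem stmt0 (α : ℝ) (hα : IsPisot α) :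
    IsClosed (specL α) ∧ specL α ⊆ Set.Icc 0 (1 / 2) :=
  ⟨hα.isClosed_specL, specL_subset_Icc α⟩
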